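/- For every m ∈ ℤ one has the commutation relation L^{1/2}_0 ∘ h_m − h_m ∘ L^{1/2}_0 = −2m · h_m on F, and for every n ∈ ℤ one has L^{1/2}_0 v_n = (n² + n/2) · v_n. (Consequently, on the Heisenberg monomial h_{−k_ℓ}⋯h_{−k_1} v_n the operator L^{1/2}_0 acts by the scalar 2(k_1 + ⋯ + k_ℓ) + n² + n/2.) -/

import Mathlib

noncomputable section

/-- The neutral fermion Fock space `F = F^{⊗1/2}`: the complex vector space with
basis `{e_S : S a finite subset of ℕ}`. -/
abbrev FockD : Type := Finset ℕ →₀ ℂ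

/-- Basis vector `e_S`. -/
def eD (S : Finset ℕ) : FockD := Finsupp.single S 1

/-- Action of the fermion mode `a_m` on the basis vector `e_S`. -/
def aVec (m : ℤ) (S : Finset ℕ) : FockD :=
  if 0 ≤ m then
    if m.toNat ∈ S then 0
    else ((-1 : ℂ) ^ (S.filter (fun s => m.toNat < s)).card) • eD (insert m.toNat S)
  else
    if (-m - 1).toNat ∈ S then
      ((-1 : ℂ) ^ (S.filter (fun s => (-m - 1).toNat < s)).card) • eD (S.erase ((-m - 1).toNat))
    else 0

/-- The fermion mode `a_m` as a linear operator on `F`. -/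
def aOp (m : ℤ) : FockD →ₗ[ℂ] FockD :=
  Finsupp.lsum ℂ fun S => LinearMap.toSpanSingleton ℂ FockD (aVec m S)

/-- Fermionic normal ordered product `:a_i a_j:`. -/
def NO (i j : ℤ) : FockD →ₗ[ℂ] FockD :=
  if 0 ≤ i then (aOp i).comp (aOp j) else -((aOp j).comp (aOp i))

/-- Heisenberg operator `h_n = (1/2) ∑_{i∈ℤ} (−1)^{i+1} :a_i a_{−2n−1−i}:`
(on each vector only finitely many summands are nonzero). -/
def hD (n : ℤ) (x : FockD) : FockD :=
  (1 / 2 : ℂ) • ∑ᶠ i : ℤ, ((-1 : ℂ) ^ (i + 1)) • NO i (-2 * n - 1 - i) x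

/-- Virasoro operator `L^{1/2}_m = (1/2) ∑_{i∈ℤ} i · :a_i a_{−m−i−1}:`. -/
def LhalfD (m : ℤ) (x : FockD) : FockD :=
  (1 / 2 : ℂ) • ∑ᶠ i : ℤ, (i : ℂ) • NO i (-m - i - 1) x

/-- 2-point Virasoro operator `L¹_n = (1/2) ∑_{j∈ℤ} :h_j h_{n−j}:`, where the bosonic
normal ordered product is `:h_j h_k: = h_j h_k` if `j ≤ k` and `h_k h_j` otherwise. -/
def L1D (n : ℤ) (x : FockD) : FockD :=
  (1 / 2 : ℂ) • ∑ᶠ j : ℤ, if j ≤ n - j then hD j (hD (n - j) x) else hD (n - j) (hD j x)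

/-- Charge `c(S) = #{s ∈ S : s odd} − #{s ∈ S : s even}`. -/
def chg (S : Finset ℕ) : ℤ :=
  ((S.filter fun s => Odd s).card : ℤ) - ((S.filter fun s => Even s).card : ℤ)

/-- Charge-`n` component `F_{(n)}`: the span of the `e_S` with `c(S) = n`. -/
def FockComp (n : ℤ) : Submodule ℂ FockD :=
  Submodule.span ℂ {x : FockD | ∃ S : Finset ℕ, chg S = n ∧ x = eD S}

/-- Index set of the vacuum-like vector `v_n`. -/
def vSet (n : ℤ) : Finset ℕ :=
  if 0 ≤ n then (Finset.range n.toNat).image fun i => 2 * i + 1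
  else (Finset.range (-n).toNat).image fun i => 2 * i

/-- Vacuum-like vector `v_n` (`v_0 = e_∅`, `v_n = e_{{1,3,…,2n−1}}`,
`v_{−n} = e_{{0,2,…,2n−2}}` for `n > 0`). -/
def vD (n : ℤ) : FockD := eD (vSet n)

theorem aOp_eD (m : ℤ) (S : Finset ℕ) : aOp m (eD S) = aVec m S := by
  simp [aOp, eD]

/-- The weight of a basis vector. -/
def wtS (S : Finset ℕ) : ℂ := ∑ t ∈ S, ((t : ℂ) + 1 / 2)

/-- The diagonal weight operator. -/
def DOp : FockD →ₗ[ℂ] FockD :=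
  Finsupp.lsum ℂ fun S => LinearMap.toSpanSingleton ℂ FockD (wtS S • eD S)

theorem DOp_eD (S : Finset ℕ) : DOp (eD S) = wtS S • eD S := by
  simp [DOp, eD]

theorem fock_induction {p : FockD → Prop} (h0 : p 0) (hadd : ∀ x y, p x → p y → p (x + y))
    (hs : ∀ (c : ℂ) S, p (c • eD S)) (x : FockD) : p x := by
  induction x using Finsupp.induction_linear with
  | zero => exact h0
  | add f g hf hg => exact hadd f g hf hg
  | single S c => simpa [eD] using hs c S

theorem DOp_aOp (m : ℤ) (x : FockD) :
    DOp (aOp m x) = aOp m (DOp x) + ((m : ℂ) + 1 / 2) • aOp m x := by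
  induction x using fock_induction with
  | h0 => simp
  | hadd x y hx hy => simp only [map_add, hx, hy, smul_add]; abel
  | hs c S =>
    simp only [map_smul, DOp_eD, aOp_eD]
    rw [smul_comm _ c, ← smul_add]
    congr 1
    unfold aVec
    split_ifs with h1 h2 h2
    · simp
    · rw [map_smul, DOp_eD, smul_smul, smul_smul, smul_smul, ← add_smul]
      congr 1
      have : wtS (insert m.toNat S) = (m : ℂ) + 1 / 2 + wtS S := by
        unfold wtS
        rw [Finset.sum_insert h2]
        have h3 : ((m.toNat : ℤ) : ℂ) = (m : ℂ) := by rw [Int.toNat_of_nonneg h1]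
        rw [← h3]; push_cast; rfl
      rw [this]; ring
    · rw [map_smul, DOp_eD, smul_smul, smul_smul, smul_smul, ← add_smul]
      congr 1
      have : wtS S = -((m : ℂ) + 1 / 2) + wtS (S.erase (-m - 1).toNat) := by
        unfold wtS
        rw [← Finset.add_sum_erase S _ h2]
        have h3 : (((-m - 1).toNat : ℤ) : ℂ) = ((-m - 1 : ℤ) : ℂ) := by
          rw [Int.toNat_of_nonneg (by omega)]
        have h4 : (((-m - 1).toNat : ℕ) : ℂ) = -(m : ℂ) - 1 := by
          push_cast at h3; exact_mod_cast h3
        rw [h4]; ring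
      rw [this]; ring
    · simp

theorem DOp_NO (i j : ℤ) (x : FockD) :
    DOp (NO i j x) = NO i j (DOp x) + ((i : ℂ) + j + 1) • NO i j x := by
  unfold NO
  split_ifs
  · simp only [LinearMap.comp_apply, DOp_aOp, map_add, map_smul]
    module
  · simp only [LinearMap.comp_apply, LinearMap.neg_apply, DOp_aOp, map_add, map_smul, map_neg]
    module

theorem aOp_kill (S : Finset ℕ) (i : ℤ) (h : i < 0) (h' : ∀ s ∈ S, (s : ℤ) < -i - 1) :
    aOp i (eD S) = 0 := by
  rw [aOp_eD]
  unfold aVec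
  rw [if_neg (by omega), if_neg]
  intro hm
  have := h' _ hm
  omega

theorem NO_finite (k : ℤ) (x : FockD) : {i : ℤ | NO i (k - i) x ≠ 0}.Finite := by
  induction x using fock_induction with
  | h0 => simp
  | hadd x y hx hy =>
    refine (hx.union hy).subset ?_
    intro i hi
    simp only [Set.mem_union, Set.mem_ofPred_eq] at *
    by_contra hc
    push Not at hc
    exact hi (by rw [map_add, hc.1, hc.2, add_zero])
  | hs c S =>
    obtain ⟨N, hN⟩ : ∃ N : ℕ, ∀ s ∈ S, s ≤ N := ⟨S.sup id, fun s hs => Finset.le_sup (f := id) hs⟩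
    refine (Set.finite_Icc (-(N : ℤ) - 2) (N + 2 + |k|)).subset ?_
    intro i hi
    by_contra hc
    apply hi
    rw [map_smul]
    have hk := le_abs_self k
    have hk0 := abs_nonneg k
    rw [Set.mem_Icc, not_and_or] at hc
    unfold NO
    split_ifs with h
    · rw [LinearMap.comp_apply, aOp_kill, map_zero, smul_zero]
      · omega
      · intro s hs
        have := hN s hs
        omega
    · rw [LinearMap.neg_apply, LinearMap.comp_apply, aOp_kill, map_zero, neg_zero, smul_zero]
      · omega
      · intro s hs
        have := hN s hs
        omega

theorem NO_support_finite (k : ℤ) (x : FockD) (c : ℤ → ℂ) :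
    (Function.support fun i : ℤ => c i • NO i (k - i) x).Finite := by
  refine (NO_finite k x).subset ?_
  intro i hi h
  exact hi (by simp [h])

theorem filter_insert_card (S : Finset ℕ) (t : ℕ) :
    ((S.erase t).filter (fun s => t < s)).card = (S.filter (fun s => t < s)).card := by
  congr 1
  ext s
  simp only [Finset.mem_filter, Finset.mem_erase]
  constructor
  · tauto
  · rintro ⟨h1, h2⟩
    exact ⟨⟨by omega, h1⟩, h2⟩

theorem aOp_pair (t : ℕ) (S : Finset ℕ) :
    aOp (t : ℤ) (aOp (-(t : ℤ) - 1) (eD S)) = if t ∈ S then eD S else 0 := by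
  have e : (-(-(t : ℤ) - 1) - 1).toNat = t := by omega
  rw [aOp_eD]
  unfold aVec
  rw [if_neg (by omega), e]
  split_ifs with h
  · rw [map_smul, aOp_eD]
    unfold aVec
    rw [if_pos (by omega), Int.toNat_natCast, if_neg (by simp), filter_insert_card, smul_smul,
      Finset.insert_erase h, ← mul_pow]
    simp
  · simp

theorem Lhalf_eD (S : Finset ℕ) :
    ∑ᶠ i : ℤ, (i : ℂ) • NO i (-1 - i) (eD S) = (2 * wtS S) • eD S := by
  have hp : ∀ t : ℕ, NO (t : ℤ) (-1 - t) (eD S) = if t ∈ S then eD S else 0 := by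
    intro t
    unfold NO
    rw [if_pos (by omega), LinearMap.comp_apply, show (-1 - (t : ℤ)) = -(t : ℤ) - 1 by ring,
      aOp_pair]
  have hn : ∀ t : ℕ, NO (-(t : ℤ) - 1) (-1 - (-(t : ℤ) - 1)) (eD S)
      = -(if t ∈ S then eD S else 0) := by
    intro t
    unfold NO
    rw [if_neg (by omega), LinearMap.neg_apply, LinearMap.comp_apply,
      show (-1 - (-(t : ℤ) - 1)) = (t : ℤ) by ring, aOp_pair]
  rw [finsum_eq_sum_of_support_subset (s := S.image (fun t : ℕ => (t : ℤ)) ∪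
    S.image (fun t : ℕ => -(t : ℤ) - 1))]
  · rw [Finset.sum_union, Finset.sum_image, Finset.sum_image, ← Finset.sum_add_distrib]
    · unfold wtS
      rw [Finset.mul_sum, Finset.sum_smul]
      refine Finset.sum_congr rfl fun t ht => ?_
      rw [hp, hn, if_pos ht]
      push_cast
      module
    · intro a _ b _ h
      simp only at h
      omega
    · intro a _ b _ h
      simp only at h
      omega
    · rw [Finset.disjoint_left]
      intro a h1 h2
      simp only [Finset.mem_image] at h1 h2
      obtain ⟨t, _, rfl⟩ := h1
      obtain ⟨u, _, h⟩ := h2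
      omega
  · intro i hi
    by_contra hc
    apply hi
    simp only [Finset.coe_union, Finset.coe_image, Set.mem_union, Set.mem_image, not_or] at hc
    rcases le_or_gt 0 i with h | h
    · obtain ⟨t, rfl⟩ := Int.eq_ofNat_of_zero_le h
      have : t ∉ S := fun ht => hc.1 ⟨t, ht, rfl⟩
      simp only [hp, if_neg this, smul_zero]
    · obtain ⟨t, ht⟩ := Int.eq_ofNat_of_zero_le (show 0 ≤ -i - 1 by omega)
      obtain rfl : i = -(t : ℤ) - 1 := by omega
      have : t ∉ S := fun ht => hc.2 ⟨t, ht, rfl⟩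
      simp only [hn, if_neg this, smul_zero, neg_zero]

theorem Lhalf_eq (x : FockD) : LhalfD 0 x = DOp x := by
  have key : ∑ᶠ i : ℤ, (i : ℂ) • NO i (-1 - i) x = (2 : ℂ) • DOp x := by
    induction x using fock_induction with
    | h0 => simp
    | hadd x y hx hy =>
      simp only [map_add, smul_add]
      rw [finsum_add_distrib (NO_support_finite (-1) x _) (NO_support_finite (-1) y _), hx, hy]
    | hs c S =>
      simp only [map_smul, smul_comm _ c]
      rw [← smul_finsum' c (NO_support_finite (-1) (eD S) _), Lhalf_eD, DOp_eD, smul_smul 2]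
  unfold LhalfD
  simp only [show ∀ i : ℤ, (-0 - i - 1 : ℤ) = -1 - i by intro i; ring, key, smul_smul]
  norm_num

theorem L0_h (m : ℤ) (x : FockD) :
    DOp (hD m x) = hD m (DOp x) + (-2 * (m : ℂ)) • hD m x := by
  unfold hD
  have hf := fun y => NO_support_finite (-2 * m - 1) y (fun i => (-1 : ℂ) ^ (i + 1))
  rw [map_smul, smul_comm _ (1 / 2 : ℂ), ← smul_add]
  congr 1
  have hd := map_finsum DOp (hf x)
  rw [hd, smul_finsum' _ (hf x), ← finsum_add_distrib (hf (DOp x))]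
  · refine finsum_congr fun i => ?_
    rw [map_smul, DOp_NO]
    push_cast
    module
  · refine (hf x).subset ?_
    intro i hi h
    exact hi (by simp only [h, smul_zero])

theorem wt_odd (n : ℕ) : wtS ((Finset.range n).image fun i => 2 * i + 1)
    = (n : ℂ) ^ 2 + (n : ℂ) / 2 := by
  unfold wtS
  rw [Finset.sum_image (by intro a _ b _ h; simp only at h; omega)]
  induction n with
  | zero => simp
  | succ k ih => rw [Finset.sum_range_succ, ih]; push_cast; ring

theorem wt_even (n : ℕ) : wtS ((Finset.range n).image fun i => 2 * i)
    = (n : ℂ) ^ 2 - (n : ℂ) / 2 := by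
  unfold wtS
  rw [Finset.sum_image (by intro a _ b _ h; simp only at h; omega)]
  induction n with
  | zero => simp
  | succ k ih => rw [Finset.sum_range_succ, ih]; push_cast; ring

/-- For every `m ∈ ℤ` one has `L^{1/2}_0 ∘ h_m − h_m ∘ L^{1/2}_0 = −2m · h_m` on `F`, and
for every `n ∈ ℤ` one has `L^{1/2}_0 v_n = (n² + n/2) v_n`. -/
theorem L0_h_commutator_and_vacuum_eigenvalue :
    (∀ (m : ℤ) (x : FockD),
      LhalfD 0 (hD m x) - hD m (LhalfD 0 x) = (-2 * (m : ℂ)) • hD m x) ∧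
    (∀ n : ℤ, LhalfD 0 (vD n) = ((n : ℂ) ^ 2 + (n : ℂ) / 2) • vD n) := by
  refine ⟨fun m x => ?_, fun n => ?_⟩
  · rw [Lhalf_eq, Lhalf_eq, L0_h, add_sub_cancel_left]
  · rw [Lhalf_eq, vD, DOp_eD]
    congr 1
    unfold vSet
    split_ifs with h
    · obtain ⟨t, rfl⟩ := Int.eq_ofNat_of_zero_le h
      rw [Int.toNat_natCast, wt_odd]
      push_cast
      ring
    · obtain ⟨t, ht⟩ := Int.eq_ofNat_of_zero_le (show 0 ≤ -n by omega)
      obtain rfl : n = -(t : ℤ) := by omega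
      rw [neg_neg, Int.toNat_natCast, wt_even]
      push_cast
      ring
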